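/- Let α be a purely imaginary quaternion of norm 1. Then there exists a 2-dimensional real subspace L of ℍ such that x·α = -(i·x) for every x ∈ L and x·α = i·x for every x in the orthogonal complement of L. -/

import Mathlib

/-!
Left multiplication by `i` and right multiplication by `α` are commuting skew-adjoint maps of `ℍ`
which both square to `-1` (for `α` this is `sq_eq_neg_one_of_unit_imaginary`). Hence
`B x = x * α - i * x` is skew-adjoint and takes values in `L = {x | x * α = -(i * x)}`. For
`x ∈ Lᗮ` this gives `⟪B x, B x⟫ = -⟪x, B (B x)⟫ = 0`, so `x * α = i * x`; the converse also
holds, so `Lᗮ = {x | x * α = i * x}`. Left multiplication by `j` anticommutes with `i` and commutes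
with right multiplication by `α`, so it exchanges `L` and `Lᗮ`. They therefore have the same
dimension, which is half of `4`.
-/

open scoped Quaternion

/-- The quaternion `i`. -/
def qI : ℍ[ℝ] := ⟨0, 1, 0, 0⟩

open scoped InnerProductSpace

/-- The quaternion `j`. -/
def qJ : ℍ[ℝ] := ⟨0, 0, 1, 0⟩

@[simp] theorem qI_re : qI.re = 0 := rfl
@[simp] theorem qI_imI : qI.imI = 1 := rfl
@[simp] theorem qI_imJ : qI.imJ = 0 := rfl
@[simp] theorem qI_imK : qI.imK = 0 := rfl
@[simp] theorem qJ_re : qJ.re = 0 := rfl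
@[simp] theorem qJ_imI : qJ.imI = 0 := rfl
@[simp] theorem qJ_imJ : qJ.imJ = 1 := rfl
@[simp] theorem qJ_imK : qJ.imK = 0 := rfl

theorem qI_mul_qI : qI * qI = -1 := by
  ext <;> simp

theorem sq_eq_neg_one_of_unit_imaginary {α : ℍ[ℝ]} (hα : α.re = 0) (hαn : ‖α‖ = 1) :
    α * α = -1 := by
  have h1 : star α = -α := by ext <;> simp [hα]
  have h2 : α * star α = 1 := by
    rw [Quaternion.self_mul_star, Quaternion.normSq_eq_norm_mul_self, hαn]
    simp
  rw [h1, mul_neg] at h2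
  rw [← h2, neg_neg]

theorem inner_qI_mul (x y : ℍ[ℝ]) : ⟪qI * x, y⟫_ℝ = -⟪x, qI * y⟫_ℝ := by
  simp [Quaternion.inner_def]
  ring

theorem inner_mul_imaginary {α : ℍ[ℝ]} (hα : α.re = 0) (x y : ℍ[ℝ]) :
    ⟪x * α, y⟫_ℝ = -⟪x, y * α⟫_ℝ := by
  simp [Quaternion.inner_def, hα]
  ring

/-- For a unit imaginary quaternion `α` there is a `2`-dimensional real subspace `L` of
`ℍ` on which right multiplication by `α` agrees with left multiplication by `-i`, while
on the orthogonal complement of `L` it agrees with left multiplication by `i`. -/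
theorem exists_plane_right_mul_eq_neg_left_mul (α : ℍ[ℝ]) (hα : α.re = 0) (hαn : ‖α‖ = 1) :
    ∃ L : Submodule ℝ ℍ[ℝ], Module.finrank ℝ L = 2 ∧
      (∀ x ∈ L, x * α = -(qI * x)) ∧ (∀ x ∈ Lᗮ, x * α = qI * x) := by
  have hsq := sq_eq_neg_one_of_unit_imaginary hα hαn
  let L : Submodule ℝ ℍ[ℝ] :=
    LinearMap.ker (LinearMap.mulRight ℝ α + LinearMap.mulLeft ℝ qI)
  have hL : ∀ x, x ∈ L ↔ x * α = -(qI * x) := fun x => by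
    simp [L, LinearMap.mem_ker, add_eq_zero_iff_eq_neg]
  have hB : ∀ x, x * α - qI * x ∈ L := fun x => by
    rw [hL, sub_mul, mul_sub, mul_assoc x, hsq, ← mul_assoc qI qI x, qI_mul_qI, mul_assoc qI x α]
    noncomm_ring
  have hperp : ∀ x, x ∈ Lᗮ ↔ x * α = qI * x := fun x => by
    constructor
    · intro hx
      have h := Submodule.inner_left_of_mem_orthogonal (hB (x * α - qI * x)) hx
      rw [inner_sub_right, ← neg_neg ⟪x, (x * α - qI * x) * α⟫_ℝ,
        ← neg_neg ⟪x, qI * (x * α - qI * x)⟫_ℝ, ← inner_mul_imaginary hα, ← inner_qI_mul,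
        ← neg_sub', ← inner_sub_left, neg_eq_zero, inner_self_eq_zero] at h
      exact sub_eq_zero.mp h
    · intro hx
      rw [Submodule.mem_orthogonal]
      have key : ∀ u ∈ L, ⟪u * α, x⟫_ℝ = 0 := fun u hu => by
        have h1 := inner_mul_imaginary hα u x
        have h2 := inner_qI_mul u x
        have h3 : ⟪u * α, x⟫_ℝ = -⟪qI * u, x⟫_ℝ := by rw [(hL u).1 hu, inner_neg_left]
        rw [hx] at h1
        linarith
      intro u hu
      -- `L` is stable under right multiplication by `α`, and `u = -(u * α) * α`.
      have hu' : u * α ∈ L := by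
        rw [hL, ← mul_assoc, ← neg_mul, ← (hL u).1 hu]
      have h := key _ hu'
      rwa [mul_assoc, hsq, mul_neg_one, inner_neg_left, neg_eq_zero] at h
  have hJ0 : qJ ≠ 0 := fun h => by
    simpa using congrArg (fun q : ℍ[ℝ] => q.imJ) h
  have hJI : qI * qJ = -(qJ * qI) := by
    ext <;> simp
  have hinj : Function.Injective (LinearMap.mulLeft ℝ qJ) := mul_right_injective₀ hJ0
  have h1 : L.map (LinearMap.mulLeft ℝ qJ) ≤ Lᗮ := by
    rintro _ ⟨x, hx, rfl⟩
    rw [hperp, LinearMap.mulLeft_apply, mul_assoc, (hL x).1 hx, ← mul_assoc qI, hJI]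
    simp [mul_assoc]
  have h2 : Lᗮ.map (LinearMap.mulLeft ℝ qJ) ≤ L := by
    rintro _ ⟨x, hx, rfl⟩
    rw [hL, LinearMap.mulLeft_apply, mul_assoc, (hperp x).1 hx, ← mul_assoc qI, hJI]
    simp [mul_assoc]
  have d1 := Submodule.finrank_mono h1
  have d2 := Submodule.finrank_mono h2
  rw [← (Submodule.equivMapOfInjective _ hinj _).finrank_eq] at d1 d2
  have d3 := L.finrank_add_finrank_orthogonal
  rw [Quaternion.finrank_eq_four] at d3
  exact ⟨L, by omega, fun x hx => (hL x).1 hx, fun x hx => (hperp x).1 hx⟩
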